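/- Let E be a separable Banach space and let μ be a Gaussian measure on E, i.e., a Borel probability measure such that the pushforward of μ under every continuous linear functional L : E → ℝ is a Gaussian measure on ℝ. Then there exist constants c > 0 and C > 0 such that for every ε > 0 and every R > 0, μ({x ∈ E : ε‖x‖ > R}) ≤ C exp(−c ε^{−2} R²). -/

import Mathlib

open MeasureTheory

/-- **Gaussian tail bound (Fernique).** If `μ` is a Gaussian measure on a separable
Banach space `E` (every one-dimensional projection by a continuous linear functional
is Gaussian on `ℝ`), then there are `c, C > 0` with
`μ {x : ε ‖x‖ > R} ≤ C exp(-c ε⁻² R²)` for all `ε, R > 0`. -/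
theorem gaussian_tail_bound
    {E : Type*} [NormedAddCommGroup E] [NormedSpace ℝ E] [CompleteSpace E]
    [TopologicalSpace.SeparableSpace E] [MeasurableSpace E] [BorelSpace E]
    (μ : Measure E) [IsProbabilityMeasure μ]
    (hgauss : ∀ L : E →L[ℝ] ℝ, ∃ (m : ℝ) (v : NNReal),
      μ.map L = ProbabilityTheory.gaussianReal m v) :
    ∃ c > (0 : ℝ), ∃ C > (0 : ℝ), ∀ ε > (0 : ℝ), ∀ R > (0 : ℝ),
      μ {x : E | ε * ‖x‖ > R} ≤ ENNReal.ofReal (C * Real.exp (-(c * R ^ 2 / ε ^ 2))) := by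
  have : SecondCountableTopology E := UniformSpace.secondCountable_of_separable E
  have : ProbabilityTheory.IsGaussian μ :=
    ProbabilityTheory.isGaussian_of_map_eq_gaussianReal hgauss
  obtain ⟨c, hc, hint⟩ := ProbabilityTheory.IsGaussian.exists_integrable_exp_sq μ
  have hI : 0 ≤ ∫ x, Real.exp (c * ‖x‖ ^ 2) ∂μ := integral_nonneg fun x => (Real.exp_pos _).le
  refine ⟨c, hc, (∫ x, Real.exp (c * ‖x‖ ^ 2) ∂μ) + 1, by linarith, fun ε hε R hR => ?_⟩
  have hmk := mul_meas_ge_le_integral_of_nonneg (μ := μ)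
    (Filter.Eventually.of_forall fun x => (Real.exp_pos (c * ‖x‖ ^ 2)).le) hint
    (Real.exp (c * R ^ 2 / ε ^ 2))
  have hsub : {x : E | ε * ‖x‖ > R} ⊆
      {x | Real.exp (c * R ^ 2 / ε ^ 2) ≤ Real.exp (c * ‖x‖ ^ 2)} := by
    intro x hx
    simp only [Set.mem_ofPred_eq, gt_iff_lt, Real.exp_le_exp] at hx ⊢
    rw [div_le_iff₀ (by positivity), mul_assoc, ← mul_pow, mul_comm ‖x‖ ε]
    gcongr
  refine (measure_mono hsub).trans ?_
  rw [← ofReal_measureReal]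
  apply ENNReal.ofReal_le_ofReal
  rw [Real.exp_neg, ← div_eq_mul_inv, le_div_iff₀ (Real.exp_pos _), mul_comm]
  linarith
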